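/- Let X be a simplicial surface. Then the following are equivalent: (a) Aut(X) acts transitively on the edges X_1, has exactly one orbit on the faces X_2, and the stabiliser in Aut(X) of every edge has order 4; (b) Aut(X) acts transitively on the faces X_2, has exactly one orbit on the vertices X_0, and the stabiliser in Aut(X) of every face has order 6. -/

import Mathlib

open Finset

/-- A (connected) simplicial surface: a finite, downward-closed family of nonempty subsets of
the vertex set `α`, pure of dimension 2, such that every edge lies in exactly two faces,
the faces around each vertex form an umbrella, and the surface is connected. -/
structure SimplicialSurface (α : Type*) [Fintype α] [DecidableEq α] where
  cplx : Finset (Finset α)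
  nonempty_of_mem : ∀ s ∈ cplx, s.Nonempty
  down_closed : ∀ s ∈ cplx, ∀ t : Finset α, t.Nonempty → t ⊆ s → t ∈ cplx
  card_le_three : ∀ s ∈ cplx, s.card ≤ 3
  pure_two : ∀ s ∈ cplx, ∃ F ∈ cplx, s ⊆ F ∧ F.card = 3
  dim_two : ∃ F ∈ cplx, F.card = 3
  all_vertices : ∀ x : α, {x} ∈ cplx
  edge_in_two_faces : ∀ e ∈ cplx, e.card = 2 →
    (cplx.filter (fun F => e ⊆ F ∧ F.card = 3)).card = 2
  umbrella_exists : ∀ v : α, ∃ n : ℕ, 0 < n ∧ ∃ u : Fin n → Finset α,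
    Function.Injective u ∧
    (∀ i, u i ∈ cplx ∧ (u i).card = 3 ∧ v ∈ u i) ∧
    (∀ F ∈ cplx, F.card = 3 → v ∈ F → ∃ i, u i = F) ∧
    (∀ i : Fin n, (u i ∩ u (finRotate n i)).card = 2)
  connected : ∀ F ∈ cplx, ∀ G ∈ cplx, F.card = 3 → G.card = 3 →
    Relation.ReflTransGen (fun A B => A ∈ cplx ∧ B ∈ cplx ∧ (A ∩ B).card = 2) F G

lemma Equiv.Perm.finset_image_mul {α : Type*} [DecidableEq α] (π σ : Equiv.Perm α)
    (s : Finset α) :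
    Finset.image ⇑(π * σ) s = Finset.image ⇑π (Finset.image ⇑σ s) := by
  rw [Finset.image_image]
  rfl

namespace SimplicialSurface

variable {α : Type*} [Fintype α] [DecidableEq α] (X : SimplicialSurface α)

/-- The set `X_2` of faces of `X`, i.e. the 3-element members. -/
def faces : Finset (Finset α) := X.cplx.filter fun s => s.card = 3

/-- The set `X_1` of edges of `X`, i.e. the 2-element members. -/
def edges : Finset (Finset α) := X.cplx.filter fun s => s.card = 2

/-- The automorphism group of `X`: permutations of the vertices mapping members of the
complex to members of the complex. -/
def aut : Subgroup (Equiv.Perm α) where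
  carrier := { π | ∀ s : Finset α, s ∈ X.cplx ↔ Finset.image ⇑π s ∈ X.cplx }
  one_mem' := by intro s; simp
  mul_mem' := by
    intro π σ hπ hσ s
    rw [Equiv.Perm.finset_image_mul, ← hπ (Finset.image ⇑σ s), ← hσ s]
  inv_mem' := by
    intro π hπ s
    have h2 : Finset.image ⇑π (Finset.image ⇑π⁻¹ s) = s := by ext x; simp
    have h := hπ (Finset.image ⇑π⁻¹ s)
    rw [h2] at h
    exact h.symm

/-- The setwise stabiliser in `Aut(X)` of a set `s` of vertices. -/
def stab (s : Finset α) : Subgroup (Equiv.Perm α) where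
  carrier := { π | π ∈ X.aut ∧ Finset.image ⇑π s = s }
  one_mem' := ⟨X.aut.one_mem, by simp⟩
  mul_mem' := by
    rintro π σ ⟨hπ, hπs⟩ ⟨hσ, hσs⟩
    exact ⟨X.aut.mul_mem hπ hσ, by rw [Equiv.Perm.finset_image_mul, hσs, hπs]⟩
  inv_mem' := by
    rintro π ⟨hπ, hπs⟩
    refine ⟨X.aut.inv_mem hπ, ?_⟩
    calc Finset.image ⇑π⁻¹ s = Finset.image ⇑π⁻¹ (Finset.image ⇑π s) := by rw [hπs]
      _ = s := by ext x; simp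

/-- `X` is edge-transitive if `Aut(X)` acts transitively on the edges `X_1`. -/
def EdgeTransitive : Prop :=
  ∀ e₁ ∈ X.edges, ∀ e₂ ∈ X.edges, ∃ π ∈ X.aut, Finset.image ⇑π e₁ = e₂

/-- The orbit of a set of vertices under `Aut(X)`. -/
def orbit (s : Finset α) : Set (Finset α) := { t | ∃ π ∈ X.aut, Finset.image ⇑π s = t }

/-- The set of `Aut(X)`-orbits on the faces of `X`. -/
def faceOrbits : Set (Set (Finset α)) := { O | ∃ F ∈ X.faces, O = X.orbit F }

/-- The set of `Aut(X)`-orbits on the vertices of `X`. -/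
def vertexOrbits : Set (Set α) := { O | ∃ v : α, O = { w | ∃ π ∈ X.aut, π v = w } }

/-- The degree of a vertex: the number of faces containing it. -/
def degree (v : α) : ℕ := (X.faces.filter fun F => v ∈ F).card

end SimplicialSurface

/-!
An automorphism fixing a face pointwise is the identity: it also fixes the second face at each edge
of that face, and faces are strongly connected. Hence `Stab(F)` embeds into `Sym(F)`, and `Stab(F)`
has order `6` iff every permutation of `F` extends to an automorphism. Together with
face-transitivity this makes `Aut(X)` transitive on pairs (face, vertex of it), hence on vertices
and, passing from a vertex of a face to the opposite edge, on edges. The orders of the stabilisers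
are related by orbit–stabiliser and the double count `3|X_2| = 2|X_1|`, which give
`3|Stab(e)| = 2|Stab(F)|`.
-/

theorem ncard_image_orbit_eq_one_iff {G β : Type*} [Group G] [MulAction G β] {S : Set β}
    (hS : S.Nonempty) :
    (MulAction.orbit G '' S).ncard = 1 ↔ ∀ a ∈ S, ∀ b ∈ S, b ∈ MulAction.orbit G a := by
  rw [Set.ncard_eq_one, Set.exists_eq_singleton_iff_nonempty_subsingleton,
    and_iff_right (hS.image _)]
  simp only [Set.Subsingleton, Set.forall_mem_image, MulAction.orbit_eq_iff]
  exact ⟨fun h a ha b hb => h hb ha, fun h a ha b hb => h b hb a ha⟩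

theorem eqOn_id_of_mapsTo_of_eqOn_id_diff_singleton {β : Type*} {f : β → β}
    (hf : Function.Injective f) {s : Set β} {x : β} (hs : Set.MapsTo f s s)
    (hfix : Set.EqOn f id (s \ {x})) : Set.EqOn f id s := by
  intro y hy
  rcases eq_or_ne y x with rfl | hyx
  · by_contra hne
    exact hne (hf (hfix ⟨hs hy, hne⟩))
  · exact hfix ⟨hy, hyx⟩

namespace SimplicialSurface

variable {α : Type*} [Fintype α] [DecidableEq α] (X : SimplicialSurface α)

theorem mem_faces {F : Finset α} : F ∈ X.faces ↔ F ∈ X.cplx ∧ #F = 3 := mem_filter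

theorem mem_edges {e : Finset α} : e ∈ X.edges ↔ e ∈ X.cplx ∧ #e = 2 := mem_filter

theorem faces_nonempty : X.faces.Nonempty :=
  let ⟨F, hF⟩ := X.dim_two
  ⟨F, X.mem_faces.2 hF⟩

theorem exists_face_superset {s : Finset α} (hs : s ∈ X.cplx) : ∃ F ∈ X.faces, s ⊆ F :=
  let ⟨F, hF, hsF, hcard⟩ := X.pure_two s hs
  ⟨F, X.mem_faces.2 ⟨hF, hcard⟩, hsF⟩

theorem exists_face_mem (v : α) : ∃ F ∈ X.faces, v ∈ F := by
  simpa only [singleton_subset_iff] using X.exists_face_superset (X.all_vertices v)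

theorem mem_edges_of_subset {s e : Finset α} (hs : s ∈ X.cplx) (hes : e ⊆ s)
    (he : #e = 2) : e ∈ X.edges :=
  X.mem_edges.2 ⟨X.down_closed s hs e (card_pos.1 (by lia)) hes, he⟩

theorem filter_edges_subset_eq_powersetCard {F : Finset α} (hF : F ∈ X.faces) :
    {e ∈ X.edges | e ⊆ F} = F.powersetCard 2 := by
  ext e
  rw [mem_filter, mem_powersetCard]
  exact ⟨fun ⟨he, heF⟩ => ⟨heF, (X.mem_edges.1 he).2⟩,
    fun ⟨heF, he⟩ => ⟨X.mem_edges_of_subset (X.mem_faces.1 hF).1 heF he, heF⟩⟩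

theorem card_filter_edges_subset {F : Finset α} (hF : F ∈ X.faces) :
    #{e ∈ X.edges | e ⊆ F} = 3 := by
  rw [X.filter_edges_subset_eq_powersetCard hF, card_powersetCard, (X.mem_faces.1 hF).2]
  rfl

theorem edges_nonempty : X.edges.Nonempty := by
  obtain ⟨F, hF⟩ := X.faces_nonempty
  have hpos : 0 < #{e ∈ X.edges | e ⊆ F} := by simp [X.card_filter_edges_subset hF]
  exact (card_pos.1 hpos).mono (filter_subset _ _)

theorem card_filter_faces_superset {e : Finset α} (he : e ∈ X.edges) :
    #{F ∈ X.faces | e ⊆ F} = 2 := by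
  obtain ⟨he, hcard⟩ := X.mem_edges.1 he
  rw [← X.edge_in_two_faces e he hcard, faces, filter_filter]
  simp only [and_comm]

theorem card_faces_mul_three : #X.faces * 3 = #X.edges * 2 :=
  card_mul_eq_card_mul (fun F e => e ⊆ F) (fun _ => X.card_filter_edges_subset)
    (fun _ => X.card_filter_faces_superset)

theorem exists_erase_eq_of_edge_subset_face {e F : Finset α} (he : e ∈ X.edges)
    (hF : F ∈ X.faces) (heF : e ⊆ F) : ∃ x ∈ F, F.erase x = e := by
  rw [← covBy_iff_exists_erase, covBy_iff_card_sdiff_eq_one, card_sdiff_of_subset heF,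
    (X.mem_edges.1 he).2, (X.mem_faces.1 hF).2]
  exact ⟨heF, rfl⟩

theorem eq_or_eq_of_edge_subset {e A B C : Finset α} (he : e ∈ X.edges) (hA : A ∈ X.faces)
    (hB : B ∈ X.faces) (hC : C ∈ X.faces) (heA : e ⊆ A) (heB : e ⊆ B) (heC : e ⊆ C)
    (hAB : A ≠ B) : C = A ∨ C = B := by
  have hsub : {A, B} ⊆ {F ∈ X.faces | e ⊆ F} := by
    simp only [insert_subset_iff, singleton_subset_iff, mem_filter]
    exact ⟨⟨hA, heA⟩, hB, heB⟩
  have heq : {A, B} = {F ∈ X.faces | e ⊆ F} :=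
    eq_of_subset_of_card_le hsub (by rw [X.card_filter_faces_superset he, card_pair hAB])
  have hmem : C ∈ ({A, B} : Finset (Finset α)) := heq ▸ mem_filter.2 ⟨hC, heC⟩
  simpa only [mem_insert, mem_singleton] using hmem

theorem face_induction {Q : Finset α → Prop} {F : Finset α} (hF : F ∈ X.faces) (base : Q F)
    (step : ∀ A ∈ X.faces, ∀ B ∈ X.faces, ∀ e ∈ X.edges, e ⊆ A → e ⊆ B → Q A → Q B)
    {G : Finset α} (hG : G ∈ X.faces) : Q G := by
  obtain ⟨hFX, hF3⟩ := X.mem_faces.1 hF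
  obtain ⟨hGX, hG3⟩ := X.mem_faces.1 hG
  -- The paths of `X.connected` may run through edges too, so the claim is carried by the faces
  -- above each member of the path.
  suffices above_path : ∀ P : Finset α,
      Relation.ReflTransGen (fun A B => A ∈ X.cplx ∧ B ∈ X.cplx ∧ #(A ∩ B) = 2) F P →
        ∀ C ∈ X.faces, P ⊆ C → Q C from
    above_path G (X.connected F hFX G hGX hF3 hG3) G hG Subset.rfl
  intro P hP
  induction hP with
  | refl =>
    intro C hC hFC
    rwa [← eq_of_subset_of_card_le hFC (by rw [(X.mem_faces.1 hC).2, hF3])]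
  | @tail A B _ hAB ih =>
    obtain ⟨hA, -, hcard⟩ := hAB
    intro C hC hBC
    obtain ⟨A', hA', hAA'⟩ := X.exists_face_superset hA
    exact step A' hA' C hC (A ∩ B) (X.mem_edges_of_subset hA inter_subset_left hcard)
      (inter_subset_left.trans hAA') (inter_subset_right.trans hBC) (ih A' hA' hAA')

variable {X}

theorem image_mem_faces {π : Equiv.Perm α} (hπ : π ∈ X.aut) {F : Finset α} (hF : F ∈ X.faces) :
    F.image π ∈ X.faces := by
  rw [mem_faces, card_image_of_injective _ π.injective, ← hπ F]
  exact X.mem_faces.1 hF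

theorem image_mem_edges {π : Equiv.Perm α} (hπ : π ∈ X.aut) {e : Finset α} (he : e ∈ X.edges) :
    e.image π ∈ X.edges := by
  rw [mem_edges, card_image_of_injective _ π.injective, ← hπ e]
  exact X.mem_edges.1 he

theorem eqOn_id_of_adjacent_face {π : Equiv.Perm α} (hπ : π ∈ X.aut) {A B e : Finset α}
    (hA : A ∈ X.faces) (hB : B ∈ X.faces) (he : e ∈ X.edges) (heA : e ⊆ A) (heB : e ⊆ B)
    (hfix : Set.EqOn π id A) : Set.EqOn π id B := by
  have image_eq {s : Finset α} (hs : s ⊆ A) : s.image π = s :=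
    (image_congr (hfix.mono (coe_subset.2 hs))).trans image_id
  rcases eq_or_ne A B with rfl | hAB
  · exact hfix
  have hBB : B.image π = B := by
    have heπB : e ⊆ B.image π := image_eq heA ▸ image_subset_image heB
    refine (X.eq_or_eq_of_edge_subset he hA hB (image_mem_faces hπ hB) heA heB heπB
      hAB).resolve_left fun hBA => hAB ?_
    exact image_injective π.injective ((image_eq Subset.rfl).trans hBA.symm)
  obtain ⟨x, -, rfl⟩ := X.exists_erase_eq_of_edge_subset_face he hB heB
  have hmaps : Set.MapsTo π B B := Finset.image_subset_iff.1 hBB.subset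
  refine eqOn_id_of_mapsTo_of_eqOn_id_diff_singleton π.injective hmaps (x := x) ?_
  rw [← coe_erase]
  exact hfix.mono (coe_subset.2 heA)

theorem eq_one_of_eqOn_id_face {π : Equiv.Perm α} (hπ : π ∈ X.aut) {F : Finset α}
    (hF : F ∈ X.faces) (hfix : Set.EqOn π id F) : π = 1 := by
  ext x
  obtain ⟨G, hG, hx⟩ := X.exists_face_mem x
  exact X.face_induction (Q := fun G => Set.EqOn π id G) hF hfix
    (fun _ hA _ hB _ he heA heB => eqOn_id_of_adjacent_face hπ hA hB he heA heB) hG hx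

theorem apply_mem_iff_of_mem_stab {π : Equiv.Perm α} {s : Finset α} (hπ : π ∈ X.stab s)
    (x : α) : π x ∈ s ↔ x ∈ s := by
  conv_lhs => rw [← hπ.2]
  exact π.injective.mem_finset_image

variable (X) in
/-- The action of the setwise stabiliser of `s` on the elements of `s`; it compares the
stabiliser of a face with the symmetric group on its vertices. -/
def stabRestrict (s : Finset α) : X.stab s →* Equiv.Perm s where
  toFun π := π.1.subtypePerm (apply_mem_iff_of_mem_stab π.2)
  map_one' := rfl
  map_mul' _ _ := rfl

theorem stabRestrict_injective {F : Finset α} (hF : F ∈ X.faces) :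
    Function.Injective (X.stabRestrict F) := by
  rw [injective_iff_map_eq_one]
  intro π hπ
  have hfix : Set.EqOn π.1 id F := fun x hx =>
    congrArg Subtype.val (DFunLike.congr_fun hπ (⟨x, hx⟩ : F))
  exact Subtype.ext (eq_one_of_eqOn_id_face π.2.1 hF hfix)

theorem stabRestrict_surjective_of_card_eq_six {F : Finset α} (hF : F ∈ X.faces)
    (h6 : Nat.card (X.stab F) = 6) : Function.Surjective (X.stabRestrict F) := by
  refine ((Nat.bijective_iff_injective_and_card _).2 ⟨stabRestrict_injective hF, ?_⟩).2
  rw [h6, Nat.card_perm, Nat.card_eq_finsetCard, (X.mem_faces.1 hF).2]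
  rfl

theorem exists_mem_stab_apply_eq {F : Finset α} (hF : F ∈ X.faces)
    (h6 : Nat.card (X.stab F) = 6) {x y : α} (hx : x ∈ F) (hy : y ∈ F) :
    ∃ π ∈ X.stab F, π x = y := by
  obtain ⟨π, hπ⟩ := stabRestrict_surjective_of_card_eq_six hF h6 (Equiv.swap ⟨x, hx⟩ ⟨y, hy⟩)
  refine ⟨π, π.2, ?_⟩
  have hxy : X.stabRestrict F π ⟨x, hx⟩ = ⟨y, hy⟩ := by rw [hπ, Equiv.swap_apply_left]
  exact congrArg Subtype.val hxy

variable (X)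

/-- `X` is face-transitive if `Aut(X)` acts transitively on the faces `X_2`; it is the first
condition of (b), and equivalent to the second condition of (a). -/
def FaceTransitive : Prop :=
  ∀ F ∈ X.faces, ∀ G ∈ X.faces, ∃ π ∈ X.aut, F.image π = G

/-- `X` is vertex-transitive if `Aut(X)` acts transitively on the vertices `X_0`, which
restates the vertex-orbit condition of (b). -/
def VertexTransitive : Prop :=
  ∀ v w : α, ∃ π ∈ X.aut, π v = w

section Orbits

open scoped Pointwise

theorem orbit_eq_mulAction_orbit (s : Finset α) : X.orbit s = MulAction.orbit X.aut s :=
  Set.ext fun _ => ⟨fun ⟨π, hπ, h⟩ => ⟨⟨π, hπ⟩, h⟩, fun ⟨π, h⟩ => ⟨π, π.2, h⟩⟩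

theorem vertexOrbit_eq_mulAction_orbit (v : α) :
    {w | ∃ π ∈ X.aut, π v = w} = MulAction.orbit X.aut v :=
  Set.ext fun _ => ⟨fun ⟨π, hπ, h⟩ => ⟨⟨π, hπ⟩, h⟩, fun ⟨π, h⟩ => ⟨π, π.2, h⟩⟩

theorem faceOrbits_ncard_eq_one_iff : X.faceOrbits.ncard = 1 ↔ X.FaceTransitive := by
  have himage : X.faceOrbits = MulAction.orbit X.aut '' X.faces := by
    simp only [faceOrbits, orbit_eq_mulAction_orbit, Set.image, SetLike.mem_coe, eq_comm]
  rw [himage, ncard_image_orbit_eq_one_iff X.faces_nonempty]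
  simp only [← orbit_eq_mulAction_orbit]
  rfl

theorem vertexOrbits_ncard_eq_one_iff : X.vertexOrbits.ncard = 1 ↔ X.VertexTransitive := by
  have himage : X.vertexOrbits = MulAction.orbit X.aut '' Set.univ := by
    simp only [vertexOrbits, vertexOrbit_eq_mulAction_orbit, Set.image_univ, Set.range,
      eq_comm (a := MulAction.orbit _ _)]
  obtain ⟨F, hF⟩ := X.faces_nonempty
  obtain ⟨v, -⟩ := X.nonempty_of_mem F (X.mem_faces.1 hF).1
  rw [himage, ncard_image_orbit_eq_one_iff ⟨v, Set.mem_univ v⟩]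
  simp only [Set.mem_univ, true_imp_iff, ← vertexOrbit_eq_mulAction_orbit]
  rfl

theorem orbit_ncard_mul_card_stab (s : Finset α) :
    (X.orbit s).ncard * Nat.card (X.stab s) = Nat.card X.aut := by
  have hstab : (X.stab s).subgroupOf X.aut = MulAction.stabilizer X.aut s :=
    Subgroup.ext fun π => and_iff_right π.2
  have hle : X.stab s ≤ X.aut := fun _ hπ => hπ.1
  rw [orbit_eq_mulAction_orbit, ← MulAction.index_stabilizer, ← hstab,
    ← Nat.card_congr (Subgroup.subgroupOfEquivOfLe hle).toEquiv, Subgroup.index_mul_card]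

end Orbits

variable {X}

theorem EdgeTransitive.orbit_eq_edges (hX : X.EdgeTransitive) {e : Finset α}
    (he : e ∈ X.edges) : X.orbit e = X.edges :=
  Set.ext fun e' => ⟨fun ⟨_, hπ, h⟩ => h ▸ image_mem_edges hπ he, hX e he e'⟩

theorem FaceTransitive.orbit_eq_faces (hX : X.FaceTransitive) {F : Finset α}
    (hF : F ∈ X.faces) : X.orbit F = X.faces :=
  Set.ext fun G => ⟨fun ⟨_, hπ, h⟩ => h ▸ image_mem_faces hπ hF, hX F hF G⟩

theorem three_mul_card_stab_edge_eq (hEdge : X.EdgeTransitive) (hFace : X.FaceTransitive)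
    {e F : Finset α} (he : e ∈ X.edges) (hF : F ∈ X.faces) :
    3 * Nat.card (X.stab e) = 2 * Nat.card (X.stab F) := by
  have hcard : #X.edges * Nat.card (X.stab e) = #X.faces * Nat.card (X.stab F) := by
    rw [← Set.ncard_coe_finset X.edges, ← Set.ncard_coe_finset X.faces,
      ← hEdge.orbit_eq_edges he, ← hFace.orbit_eq_faces hF, orbit_ncard_mul_card_stab,
      orbit_ncard_mul_card_stab]
  apply Nat.eq_of_mul_eq_mul_left (card_pos.2 ⟨e, he⟩ : 0 < #X.edges)
  calc #X.edges * (3 * Nat.card (X.stab e))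
      = 3 * (#X.edges * Nat.card (X.stab e)) := by ring
    _ = #X.faces * 3 * Nat.card (X.stab F) := by rw [hcard]; ring
    _ = #X.edges * (2 * Nat.card (X.stab F)) := by rw [X.card_faces_mul_three]; ring

namespace FaceTransitive

theorem exists_aut_image_eq_apply_eq (hX : X.FaceTransitive) {F G : Finset α}
    (hF : F ∈ X.faces) (hG : G ∈ X.faces) (h6 : Nat.card (X.stab G) = 6) {x y : α}
    (hx : x ∈ F) (hy : y ∈ G) :
    ∃ π ∈ X.aut, F.image π = G ∧ π x = y := by
  obtain ⟨π, hπ, rfl⟩ := hX F hF G hG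
  obtain ⟨σ, hσ, hσx⟩ := exists_mem_stab_apply_eq hG h6 (mem_image_of_mem π hx) hy
  exact ⟨σ * π, X.aut.mul_mem hσ.1 hπ, by rw [Equiv.Perm.finset_image_mul, hσ.2], hσx⟩

theorem vertexTransitive (hX : X.FaceTransitive)
    (h6 : ∀ F ∈ X.faces, Nat.card (X.stab F) = 6) : X.VertexTransitive := by
  intro v w
  obtain ⟨F, hF, hv⟩ := X.exists_face_mem v
  obtain ⟨G, hG, hw⟩ := X.exists_face_mem w
  obtain ⟨π, hπ, -, hπv⟩ := hX.exists_aut_image_eq_apply_eq hF hG (h6 G hG) hv hw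
  exact ⟨π, hπ, hπv⟩

theorem edgeTransitive (hX : X.FaceTransitive)
    (h6 : ∀ F ∈ X.faces, Nat.card (X.stab F) = 6) : X.EdgeTransitive := by
  intro e₁ he₁ e₂ he₂
  obtain ⟨F, hF, heF⟩ := X.exists_face_superset (X.mem_edges.1 he₁).1
  obtain ⟨G, hG, heG⟩ := X.exists_face_superset (X.mem_edges.1 he₂).1
  obtain ⟨x, hx, rfl⟩ := X.exists_erase_eq_of_edge_subset_face he₁ hF heF
  obtain ⟨y, hy, rfl⟩ := X.exists_erase_eq_of_edge_subset_face he₂ hG heG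
  obtain ⟨π, hπ, hπF, hπx⟩ := hX.exists_aut_image_eq_apply_eq hF hG (h6 G hG) hx hy
  exact ⟨π, hπ, by rw [image_erase π.injective, hπF, hπx]⟩

end FaceTransitive

end SimplicialSurface

/-- A simplicial surface `X` is edge-transitive with exactly one face orbit and edge
stabilisers of order `4` if and only if it is face-transitive with exactly one vertex orbit
and face stabilisers of order `6`. -/
theorem fe_one_four_iff_vf_one_six
    {α : Type*} [Fintype α] [DecidableEq α] (X : SimplicialSurface α) :
    (X.EdgeTransitive ∧ X.faceOrbits.ncard = 1 ∧
        ∀ e ∈ X.edges, Nat.card (X.stab e) = 4) ↔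
      ((∀ F ∈ X.faces, ∀ G ∈ X.faces, ∃ π ∈ X.aut, Finset.image ⇑π F = G) ∧
        X.vertexOrbits.ncard = 1 ∧
        ∀ F ∈ X.faces, Nat.card (X.stab F) = 6) := by
  rw [X.faceOrbits_ncard_eq_one_iff, X.vertexOrbits_ncard_eq_one_iff]
  constructor
  · rintro ⟨hEdge, hFace, h4⟩
    have h6 : ∀ F ∈ X.faces, Nat.card (X.stab F) = 6 := by
      intro F hF
      obtain ⟨e, he⟩ := X.edges_nonempty
      have hratio := SimplicialSurface.three_mul_card_stab_edge_eq hEdge hFace he hF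
      rw [h4 e he] at hratio
      lia
    exact ⟨hFace, hFace.vertexTransitive h6, h6⟩
  · rintro ⟨hFace : X.FaceTransitive, -, h6⟩
    have hEdge : X.EdgeTransitive := hFace.edgeTransitive h6
    refine ⟨hEdge, hFace, fun e he => ?_⟩
    obtain ⟨F, hF⟩ := X.faces_nonempty
    have hratio := SimplicialSurface.three_mul_card_stab_edge_eq hEdge hFace he hF
    rw [h6 F hF] at hratio
    lia
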